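/- arXiv:1204.1106 — 2 statements merged into one kernel-verified Lean document; each statement's English description precedes it below -/
import Mathlib

section
/- Under the prox-average message passing iteration, if each device objective f_d is convex, lower semicontinuous, and proper, and there exists a saddle point (an optimal primal p⋆ with p̄⋆ = 0 and finite f(p⋆), together with y⋆ : 𝒯 → ℝ^T constant on each net such that p⋆ minimizes q ↦ f(q) + ∑_{t∈𝒯} ⟨y⋆_t, q̄_t⟩ over all q), then the primal residual converges to zero: p̄^k → 0 as k → ∞. -/
/-!
With `v^k = p^k - p̄^k` and `u⋆ = y⋆ / ρ`, the function
`V_k = ∑_t ‖v^k_t - p⋆_t‖² + ∑_t ‖u^k_t - u⋆_t‖²` is a Lyapunov function: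
`V_{k+1} ≤ V_k - ∑_t ‖p̄^{k+1}_t‖²`. Being antitone and nonnegative, `V` converges, so its
decrements, and with them `p̄^{k+1}`, tend to zero.

The decrease comes from adding two inequalities: the variational characterization of the proximal
step (`prox_variational`) tested at `p⋆`, and the saddle point inequality tested at `p^{k+1}`. Net
averaging is an orthogonal projection onto the schedules constant on nets (`sum_inner_netAvg`), so
the cross terms between price-like vectors (constant on nets) and vectors of zero net average
vanish, and the rest is a polarization identity (`lyapunov_identity`).
-/

open Finset RealInnerProductSpace

/-- Average net power imbalance: `p̄ t = (1/|n|) ∑_{t'∈n} p t'`, where `n` is the net of `t`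
(nets are the fibers of `net : 𝒯 → N`). -/
noncomputable def netAvg {𝒯 N : Type*} [Fintype 𝒯] [DecidableEq N] {T : ℕ}
    (net : 𝒯 → N) (p : 𝒯 → EuclideanSpace ℝ (Fin T)) (t : 𝒯) : EuclideanSpace ℝ (Fin T) :=
  (((univ.filter fun t' => net t' = net t).card : ℝ)⁻¹) •
    ∑ t' ∈ univ.filter fun t' => net t' = net t, p t'

/-- The network objective `f(p) = ∑_{d ∈ 𝒟} f_d(p_d)`, where `p_d` is the restriction of
`p` to the terminals of device `d` (devices are the fibers of `dev : 𝒯 → D`). -/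
noncomputable def netObj {𝒯 D : Type*} [Fintype 𝒯] [Fintype D] [DecidableEq D] {T : ℕ}
    (dev : 𝒯 → D)
    (f : ∀ d : D, ({t : 𝒯 // dev t = d} → EuclideanSpace ℝ (Fin T)) → EReal)
    (p : 𝒯 → EuclideanSpace ℝ (Fin T)) : EReal :=
  ∑ d : D, f d fun t => p t.1

/-- Variational inequality of the proximal step: if `z` minimizes `g + (ρ/2)‖x - ·‖²`, then
`ρ (x - z)` is a subgradient of `g` at `z`. Obtained by comparing `z` with the points
`(1 - s) z + s q` as `s → 0⁺`. -/
lemma prox_variational {ι E : Type*} [Fintype ι] [NormedAddCommGroup E] [InnerProductSpace ℝ E]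
    (g : (ι → E) → EReal)
    (hg : ∀ x y : ι → E, ∀ a b : ℝ, 0 ≤ a → 0 ≤ b → a + b = 1 →
      g (a • x + b • y) ≤ (a : EReal) * g x + (b : EReal) * g y)
    (ρ : ℝ) (x z q : ι → E)
    (hz : ∀ y : ι → E, g z + ((ρ / 2 * ∑ t, ‖x t - z t‖ ^ 2 : ℝ) : EReal) ≤
      g y + ((ρ / 2 * ∑ t, ‖x t - y t‖ ^ 2 : ℝ) : EReal))
    (α β : ℝ) (hα : g z = α) (hβ : g q = β) :
    α + ρ * ∑ t, ⟪x t - z t, q t - z t⟫ ≤ β := by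
  set I := ∑ t, ⟪x t - z t, q t - z t⟫ with hI
  set Q := ∑ t, ‖q t - z t‖ ^ 2 with hQ
  have key : ∀ s : ℝ, 0 < s → s ≤ 1 → α + ρ * I ≤ β + s * (ρ / 2 * Q) := by
    intro s hs hs1
    have h1 := (hz ((1 - s) • z + s • q)).trans
      (add_le_add_left (hg z q (1 - s) s (by linarith) hs.le (by ring)) _)
    rw [hα, hβ] at h1
    have h2 : α + ρ / 2 * ∑ t, ‖x t - z t‖ ^ 2 ≤ (1 - s) * α + s * β +
        ρ / 2 * ∑ t, ‖x t - ((1 - s) • z + s • q) t‖ ^ 2 := by exact_mod_cast h1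
    have h3 : ∑ t, ‖x t - ((1 - s) • z + s • q) t‖ ^ 2 =
        ∑ t, ‖x t - z t‖ ^ 2 - 2 * s * I + s ^ 2 * Q := by
      rw [hI, hQ, Finset.mul_sum, Finset.mul_sum, ← Finset.sum_sub_distrib,
        ← Finset.sum_add_distrib]
      refine Finset.sum_congr rfl fun t _ => ?_
      have h4 : x t - ((1 - s) • z + s • q) t = (x t - z t) - s • (q t - z t) := by
        simp only [Pi.add_apply, Pi.smul_apply]
        module
      rw [h4, norm_sub_sq_real, inner_smul_right, norm_smul, mul_pow, Real.norm_eq_abs, sq_abs]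
      ring
    rw [h3] at h2
    refine le_of_mul_le_mul_left ?_ hs
    linarith
  have hlim : Filter.Tendsto (fun s : ℝ => β + s * (ρ / 2 * Q)) (nhdsWithin 0 (Set.Ioi 0))
      (nhds β) := by
    have hc : Continuous fun s : ℝ => β + s * (ρ / 2 * Q) := by fun_prop
    have := hc.tendsto 0
    simp only [zero_mul, add_zero] at this
    exact this.mono_left nhdsWithin_le_nhds
  refine ge_of_tendsto hlim ?_
  filter_upwards [Ioc_mem_nhdsGT (zero_lt_one' ℝ)] with s hs
  exact key s hs.1 hs.2

/-- Net averaging is the orthogonal projection onto schedules constant on nets, so pairing with such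
a schedule does not see the averaging. -/
lemma sum_inner_netAvg {𝒯 N : Type*} [Fintype 𝒯] [DecidableEq N] {T : ℕ} (net : 𝒯 → N)
    (w p : 𝒯 → EuclideanSpace ℝ (Fin T)) (hw : ∀ t t', net t = net t' → w t = w t') :
    ∑ t, ⟪w t, netAvg net p t⟫ = ∑ t, ⟪w t, p t⟫ := by
  simp only [netAvg, inner_smul_right, inner_sum, Finset.sum_filter, Finset.mul_sum]
  rw [Finset.sum_comm]
  refine Finset.sum_congr rfl fun t _ => ?_
  have h1 : ∀ t' ∈ (univ : Finset 𝒯),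
      (((univ.filter fun s => net s = net t').card : ℝ)⁻¹) *
        ⟪w t', if net t = net t' then p t else 0⟫ =
      if net t' = net t then
        (((univ.filter fun s => net s = net t).card : ℝ)⁻¹) * ⟪w t, p t⟫ else 0 := by
    intro t' _
    by_cases h : net t' = net t
    · rw [if_pos h, if_pos h.symm, h, hw t' t h]
    · rw [if_neg h, if_neg (Ne.symm h), inner_zero_right, mul_zero]
  rw [Finset.sum_congr rfl h1, ← Finset.sum_filter, Finset.sum_const, nsmul_eq_mul, ← mul_assoc,
    mul_inv_cancel₀, one_mul]
  have : t ∈ univ.filter fun s => net s = net t := by simp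
  exact_mod_cast Finset.card_ne_zero_of_mem this

lemma netAvg_congr {𝒯 N : Type*} [Fintype 𝒯] [DecidableEq N] {T : ℕ} (net : 𝒯 → N)
    (p : 𝒯 → EuclideanSpace ℝ (Fin T)) (t t' : 𝒯) (h : net t = net t') :
    netAvg net p t = netAvg net p t' := by
  simp only [netAvg, h]

/-- Polarization identity behind the decrease of the Lyapunov function. It is used with `a = v^k`,
`b = v^{k+1}`, `c = p̄^{k+1}`, `u = u^k`, `w = u⋆` and `q = p⋆`; the last two inner products vanish
after summation over terminals. -/
lemma lyapunov_identity {E : Type*} [NormedAddCommGroup E] [InnerProductSpace ℝ E]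
    (a b c u w q : E) :
    2 * ⟪a - u - (b + c) + w, q - (b + c)⟫ =
      ‖b - q‖ ^ 2 - ‖a - q‖ ^ 2 + ‖a - b‖ ^ 2 + ‖u + c - w‖ ^ 2 - ‖u - w‖ ^ 2 + ‖c‖ ^ 2
        - 2 * ⟪c, a - b⟫ - 2 * ⟪u + c - w, q - b⟫ := by
  simp only [← real_inner_self_eq_norm_sq, inner_add_left, inner_add_right, inner_sub_left,
    inner_sub_right]
  rw [real_inner_comm b a, real_inner_comm c a, real_inner_comm q a, real_inner_comm c b,
    real_inner_comm q b, real_inner_comm u c, real_inner_comm w c, real_inner_comm w u]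
  ring

/-- Prox-average message passing: if all device objectives are convex, lower
semicontinuous and proper, and a saddle point `(p⋆, y⋆)` exists, then the primal residual
converges to zero: `p̄^k → 0` as `k → ∞`. -/
theorem stmt6 {𝒯 D N : Type*} [Fintype 𝒯] [Fintype D] [DecidableEq D] [DecidableEq N]
    (dev : 𝒯 → D) (net : 𝒯 → N) (hsurj : Function.Surjective net) (T : ℕ)
    (f : ∀ d : D, ({t : 𝒯 // dev t = d} → EuclideanSpace ℝ (Fin T)) → EReal)
    (hbot : ∀ d x, f d x ≠ ⊥)
    (hconv : ∀ d, ∀ x y : {t : 𝒯 // dev t = d} → EuclideanSpace ℝ (Fin T), ∀ a b : ℝ,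
      0 ≤ a → 0 ≤ b → a + b = 1 →
      f d (a • x + b • y) ≤ (a : EReal) * f d x + (b : EReal) * f d y)
    (hlsc : ∀ d, LowerSemicontinuous (f d))
    (hproper : ∀ d, ∃ x, f d x ≠ ⊤)
    (ρ : ℝ) (hρ : 0 < ρ)
    (p u : ℕ → 𝒯 → EuclideanSpace ℝ (Fin T))
    (hu0 : ∀ t t', net t = net t' → u 0 t = u 0 t')
    -- proximal power schedule update:
    -- `p^{k+1}_d = prox_{f_d,ρ}(p^k_d − p̄^k_d − u^k_d)` for every device `d`
    (hprox : ∀ k d, ∀ y : {t : 𝒯 // dev t = d} → EuclideanSpace ℝ (Fin T),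
      f d (fun t => p (k + 1) t.1) +
        (((ρ / 2) * ∑ t : {t : 𝒯 // dev t = d},
          ‖(p k t.1 - netAvg net (p k) t.1 - u k t.1) - p (k + 1) t.1‖ ^ 2 : ℝ) : EReal) ≤
      f d y +
        (((ρ / 2) * ∑ t : {t : 𝒯 // dev t = d},
          ‖(p k t.1 - netAvg net (p k) t.1 - u k t.1) - y t‖ ^ 2 : ℝ) : EReal))
    -- scaled price update: `u^{k+1} = u^k + p̄^{k+1}`
    (hdual : ∀ k t, u (k + 1) t = u k t + netAvg net (p (k + 1)) t)
    -- a saddle point exists: an optimal primal `p⋆` with `p̄⋆ = 0` and finite `f(p⋆)`,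
    -- together with `y⋆` constant on each net, such that `p⋆` minimizes the Lagrangian
    (pstar ystar : 𝒯 → EuclideanSpace ℝ (Fin T))
    (hfeas : ∀ t, netAvg net pstar t = 0)
    (hfin : netObj dev f pstar ≠ ⊤)
    (hopt : ∀ q : 𝒯 → EuclideanSpace ℝ (Fin T),
      (∀ t, netAvg net q t = 0) → netObj dev f pstar ≤ netObj dev f q)
    (hyconst : ∀ t t', net t = net t' → ystar t = ystar t')
    (hsaddle : ∀ q : 𝒯 → EuclideanSpace ℝ (Fin T),
      netObj dev f pstar + ((∑ t, ⟪ystar t, netAvg net pstar t⟫ : ℝ) : EReal) ≤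
        netObj dev f q + ((∑ t, ⟪ystar t, netAvg net q t⟫ : ℝ) : EReal)) :
    Filter.Tendsto (fun k => netAvg net (p k)) Filter.atTop (nhds 0) := by
  classical
  -- The objective values at `p⋆` and at the iterates `p^{k+1}` are finite.
  have hfd : ∀ d, f d (fun t => pstar t.1) ≠ ⊤ := by
    intro d hd
    apply hfin
    unfold netObj
    rw [← Finset.add_sum_erase _ _ (Finset.mem_univ d), hd]
    refine EReal.top_add_of_ne_bot ?_
    refine Finset.sum_induction _ (fun r : EReal => r ≠ ⊥) (fun a b ha hb => ?_) (by simp)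
      (fun e _ => hbot e _)
    rw [Ne, EReal.add_eq_bot_iff]
    tauto
  have hfk : ∀ k d, f d (fun t => p (k + 1) t.1) ≠ ⊤ := by
    intro k d hd
    have h := hprox k d (fun t => pstar t.1)
    rw [hd, EReal.top_add_coe, top_le_iff, ← EReal.coe_toReal (hfd d) (hbot _ _),
      ← EReal.coe_add] at h
    exact EReal.coe_ne_top _ h
  set β : D → ℝ := fun d => (f d (fun t => pstar t.1)).toReal with hβdef
  set α : ℕ → D → ℝ := fun k d => (f d (fun t => p (k + 1) t.1)).toReal with hαdef
  have hβ : ∀ d, f d (fun t => pstar t.1) = (β d : EReal) := fun d =>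
    (EReal.coe_toReal (hfd d) (hbot _ _)).symm
  have hα : ∀ k d, f d (fun t => p (k + 1) t.1) = (α k d : EReal) := fun k d =>
    (EReal.coe_toReal (hfk k d) (hbot _ _)).symm
  have coe_sum : ∀ g : D → ℝ, ∑ d, (g d : EReal) = ((∑ d, g d : ℝ) : EReal) := fun g =>
    (map_sum (⟨⟨fun r : ℝ => (r : EReal), EReal.coe_zero⟩, EReal.coe_add⟩ : ℝ →+ EReal) g _).symm
  have huc : ∀ k t t', net t = net t' → u k t = u k t' := by
    intro k
    induction k with
    | zero => exact hu0
    | succ k ih =>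
      intro t t' h
      rw [hdual, hdual, ih t t' h, netAvg_congr net _ t t' h]
  set v : ℕ → 𝒯 → EuclideanSpace ℝ (Fin T) := fun k t => p k t - netAvg net (p k) t with hv
  set w : 𝒯 → EuclideanSpace ℝ (Fin T) := fun t => ρ⁻¹ • ystar t with hw
  have hprox' : ∀ k, ∑ d, α k d + ρ * ∑ t, ⟪v k t - u k t - p (k + 1) t, pstar t - p (k + 1) t⟫ ≤
      ∑ d, β d := by
    intro k
    have h := Finset.sum_le_sum fun d (_ : d ∈ univ) =>
      prox_variational (f d) (hconv d) ρ
        (fun t => p k t.1 - netAvg net (p k) t.1 - u k t.1) (fun t => p (k + 1) t.1)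
        (fun t => pstar t.1) (hprox k d) (α k d) (β d) (hα k d) (hβ d)
    rw [Finset.sum_add_distrib, ← Finset.mul_sum] at h
    rwa [Fintype.sum_fiberwise dev
      (fun t => ⟪v k t - u k t - p (k + 1) t, pstar t - p (k + 1) t⟫)] at h
  have hsad' : ∀ k, ∑ d, β d ≤ ∑ d, α k d + ∑ t, ⟪ystar t, p (k + 1) t⟫ := by
    intro k
    have h := hsaddle (p (k + 1))
    rw [sum_inner_netAvg net _ (p (k + 1)) hyconst] at h
    simp only [netObj, hα, hβ, hfeas, inner_zero_right, Finset.sum_const_zero, coe_sum] at h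
    rw [EReal.coe_zero, add_zero] at h
    exact_mod_cast h
  have hps : ∀ x : 𝒯 → EuclideanSpace ℝ (Fin T), (∀ t t', net t = net t' → x t = x t') →
      ∑ t, ⟪x t, pstar t⟫ = 0 := by
    intro x hx
    rw [← sum_inner_netAvg net _ _ hx]
    simp [hfeas]
  have hvo : ∀ k, ∀ x : 𝒯 → EuclideanSpace ℝ (Fin T), (∀ t t', net t = net t' → x t = x t') →
      ∑ t, ⟪x t, v k t⟫ = 0 := by
    intro k x hx
    simp only [hv, inner_sub_right, Finset.sum_sub_distrib, sum_inner_netAvg net _ _ hx, sub_self]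
  set V : ℕ → ℝ := fun k => ∑ t, (‖v k t - pstar t‖ ^ 2 + ‖u k t - w t‖ ^ 2) with hV
  have hdec : ∀ k, V (k + 1) + ∑ t, ‖netAvg net (p (k + 1)) t‖ ^ 2 ≤ V k := by
    intro k
    have h1 : ∑ t, ⟪v k t - u k t - p (k + 1) t + w t, pstar t - p (k + 1) t⟫ ≤ 0 := by
      have h2 : ∑ t, ⟪ystar t, p (k + 1) t⟫ =
          - (ρ * ∑ t, ⟪w t, pstar t - p (k + 1) t⟫) := by
        simp only [hw, inner_smul_left, inner_sub_right, mul_sub, Finset.sum_sub_distrib]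
        simp only [← Finset.mul_sum, hps _ hyconst]
        simp [hρ.ne']
      have h3 := hprox' k
      have h4 := hsad' k
      rw [h2] at h4
      simp only [inner_add_left, Finset.sum_add_distrib]
      refine le_of_mul_le_mul_left (a := ρ) ?_ hρ
      linarith
    have h5 : 2 * ∑ t, ⟪v k t - u k t - p (k + 1) t + w t, pstar t - p (k + 1) t⟫ =
        V (k + 1) - V k + ∑ t, ‖v k t - v (k + 1) t‖ ^ 2 +
          ∑ t, ‖netAvg net (p (k + 1)) t‖ ^ 2
          - 2 * ∑ t, ⟪netAvg net (p (k + 1)) t, v k t - v (k + 1) t⟫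
          - 2 * ∑ t, ⟪u (k + 1) t - w t, pstar t - v (k + 1) t⟫ := by
      simp only [hV, Finset.mul_sum, ← Finset.sum_sub_distrib, ← Finset.sum_add_distrib]
      refine Finset.sum_congr rfl fun t _ => ?_
      have h6 : p (k + 1) t = v (k + 1) t + netAvg net (p (k + 1)) t := by simp [hv]
      have h7 := lyapunov_identity (v k t) (v (k + 1) t) (netAvg net (p (k + 1)) t) (u k t) (w t)
        (pstar t)
      rw [← h6, ← hdual] at h7
      rw [h7]
      ring
    have h8 : ∑ t, ⟪netAvg net (p (k + 1)) t, v k t - v (k + 1) t⟫ = 0 := by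
      simp only [inner_sub_right, Finset.sum_sub_distrib,
        hvo _ _ (netAvg_congr net (p (k + 1))), sub_self]
    have h9 : ∑ t, ⟪u (k + 1) t - w t, pstar t - v (k + 1) t⟫ = 0 := by
      have hc : ∀ t t', net t = net t' → u (k + 1) t - w t = u (k + 1) t' - w t' := by
        intro t t' h
        simp only [hw, huc _ t t' h, hyconst t t' h]
      have ha := hps _ hc
      have hb := hvo (k + 1) _ hc
      simp only [inner_sub_right, Finset.sum_sub_distrib] at ha hb ⊢
      rw [ha, hb, sub_self]
    have h10 : 0 ≤ ∑ t, ‖v k t - v (k + 1) t‖ ^ 2 := by positivity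
    linarith
  have hanti : Antitone V := antitone_nat_of_succ_le fun k => by
    have h1 := hdec k
    have h2 : 0 ≤ ∑ t, ‖netAvg net (p (k + 1)) t‖ ^ 2 := by positivity
    linarith
  have hVlim := tendsto_atTop_ciInf hanti ⟨0, by rintro _ ⟨k, rfl⟩; positivity⟩
  have hdiff : Filter.Tendsto (fun k => V k - V (k + 1)) Filter.atTop (nhds 0) := by
    simpa using hVlim.sub (hVlim.comp (Filter.tendsto_add_atTop_nat 1))
  rw [← Filter.tendsto_add_atTop_iff_nat 1, tendsto_pi_nhds]
  intro t
  rw [Pi.zero_apply, tendsto_zero_iff_norm_tendsto_zero]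
  have hsq : Filter.Tendsto (fun k => ‖netAvg net (p (k + 1)) t‖ ^ 2) Filter.atTop (nhds 0) := by
    refine squeeze_zero (fun k => by positivity) (fun k => ?_) hdiff
    have h1 := hdec k
    have h2 := Finset.single_le_sum (f := fun t => ‖netAvg net (p (k + 1)) t‖ ^ 2)
      (fun t _ => by positivity) (Finset.mem_univ t)
    linarith
  simpa using hsq.sqrt
end

section
/- Under the prox-average message passing iteration, if each device objective f_d is convex, lower semicontinuous, and proper, and a saddle point exists (an optimal primal p⋆ with p̄⋆ = 0 and finite f(p⋆), together with some y : 𝒯 → ℝ^T constant on each net such that p⋆ minimizes q ↦ f(q) + ∑_{t∈𝒯} ⟨y_t, q̄_t⟩ over all q), then the scaled dual iterates converge: there exists y⋆ : 𝒯 → ℝ^T, constant on each net, such that ρ u^k → y⋆ as k → ∞ and y⋆ is a set of optimal Lagrange multipliers, i.e., some optimal p⁰ for the OPSP minimizes q ↦ f(q) + ∑_{t∈𝒯} ⟨y⋆_t, q̄_t⟩ over all q. -/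
/-! The iteration is Douglas–Rachford splitting for `f + indicator {p̄ = 0}`. Let `A` be the
orthogonal projection `p ↦ p̄` and put `s^k = p^k - p̄^k - u^k`. The proximal step says that
`ρ (s^k - p^{k+1})` is a subgradient of `f` at `p^{k+1}` (`subgrad_of_prox`), and the price update
becomes `s^{k+1} = p^{k+1} - 2 A p^{k+1} + A s^k`, with `u^k = -A s^k`.

If `(p⋆, ρ u⋆)` is a saddle point and `s⋆ = p⋆ - u⋆`, monotonicity of the subdifferential gives
`‖s^{k+1} - s⋆‖² + ‖s^k - s^{k+1}‖² ≤ ‖s^k - s⋆‖²` (`fejer_step`). Hence `s^k` is bounded and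
`s^k - s^{k+1} → 0`. Since `p^{k+1}` is an affine function of `s^k` and `s^{k+1}`, along a
subsequence `s^k → s°` and `p^{k+1} → p° = (1 - A) s°`. Lower semicontinuity passes the subgradient
inequality to the limit, so `(p°, -ρ A s°)` is again a saddle point. Applying the Fejér inequality
to this saddle point shows that `‖s^k - s°‖` is antitone, so the whole sequence `s^k` converges to
`s°`, and `ρ u^k = -ρ A s^k` converges to the multiplier `-ρ A s°` (`splitting_converges`). -/

open Finset RealInnerProductSpace

/-! ### Convergence of the splitting iteration in a Hilbert space -/

section Abstract

variable {H : Type*} [NormedAddCommGroup H] [InnerProductSpace ℝ H]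

/-- Firm nonexpansiveness of one step `s ↦ p - 2 A p + A s` relative to the fixed point
`p⋆ - u⋆`, given the monotonicity inequality `hmono`. Everything is split into the components in
the range and the kernel of the orthogonal projection `A`. -/
lemma fejer_step (A : H →ₗ[ℝ] H) (hsymm : ∀ x y, ⟪A x, y⟫ = ⟪x, A y⟫)
    (hidem : ∀ x, A (A x) = A x) {s p ps us : H} (hps : A ps = 0) (hus : A us = us)
    (hmono : 0 ≤ ⟪s - p + us, p - ps⟫) :
    ‖p - (2 : ℝ) • A p + A s - (ps - us)‖ ^ 2 + ‖s - (p - (2 : ℝ) • A p + A s)‖ ^ 2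
      ≤ ‖s - (ps - us)‖ ^ 2 := by
  have orth : ∀ x y, ⟪x - A x, A y⟫ = 0 := by
    intro x y
    rw [← hsymm, map_sub, hidem, sub_self, inner_zero_left]
  have h1 := orth (s - (ps - us)) (s - (ps - us))
  have h2 := orth (s - (ps - us)) (p - ps)
  have h3 := orth (p - ps) (s - (ps - us))
  have h4 := orth (p - ps) (p - ps)
  have hc : A (s - (ps - us)) = A s + us := by rw [map_sub, map_sub, hps, hus]; abel
  have hg : A (p - ps) = A p := by rw [map_sub, hps, sub_zero]
  obtain ⟨b, hb⟩ : ∃ b, b = s - (ps - us) - A (s - (ps - us)) := ⟨_, rfl⟩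
  obtain ⟨e, he⟩ : ∃ e, e = p - ps - A (p - ps) := ⟨_, rfl⟩
  obtain ⟨c, hc'⟩ : ∃ c, c = A (s - (ps - us)) := ⟨_, rfl⟩
  obtain ⟨g, hg'⟩ : ∃ g, g = A (p - ps) := ⟨_, rfl⟩
  rw [← hb, ← hc'] at h1
  rw [← hb, ← hg'] at h2
  rw [← he, ← hc'] at h3
  rw [← he, ← hg'] at h4
  have e1 : p - (2 : ℝ) • A p + A s - (ps - us) = e + c - g := by
    rw [he, hc', hg', hc, hg]; module
  have e2 : s - (p - (2 : ℝ) • A p + A s) = b - e + g := by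
    rw [hb, he, hg', hc, hg]; module
  have e3 : s - (ps - us) = b + c := by rw [hb, hc']; abel
  have e4 : s - p + us = b + c - e - g := by
    rw [hb, he, hg', hc']; abel
  have e5 : p - ps = e + g := by rw [he, hg']; abel
  rw [e4, e5] at hmono
  rw [e1, e2, e3]
  simp only [← real_inner_self_eq_norm_sq, inner_add_left, inner_add_right, inner_sub_left,
    inner_sub_right] at hmono ⊢
  have := real_inner_comm b c
  have := real_inner_comm b g
  have := real_inner_comm e c
  have := real_inner_comm e g
  have := real_inner_comm b e
  have := real_inner_comm c g
  linarith

/-- Convergence of the iteration on a finite-dimensional space, for an orthogonal projection `A`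
and proximal steps given through their subgradient inequality. -/
theorem splitting_converges [FiniteDimensional ℝ H] (F : H → EReal) (hbot : ∀ x, F x ≠ ⊥)
    (hlsc : LowerSemicontinuous F)
    (A : H →ₗ[ℝ] H) (hsymm : ∀ x y, ⟪A x, y⟫ = ⟪x, A y⟫) (hidem : ∀ x, A (A x) = A x)
    (ρ : ℝ) (hρ : 0 < ρ) (p u : ℕ → H) (hu0 : A (u 0) = u 0)
    (hsub : ∀ k q, F (p (k + 1)) +
      ((ρ * ⟪p k - A (p k) - u k - p (k + 1), q - p (k + 1)⟫ : ℝ) : EReal) ≤ F q)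
    (hdual : ∀ k, u (k + 1) = u k + A (p (k + 1)))
    (ps ys : H) (hps : A ps = 0) (hfin : F ps ≠ ⊤) (hys : A ys = ys)
    (hsad : ∀ q, F ps ≤ F q + ((⟪ys, q⟫ : ℝ) : EReal)) :
    ∃ yl p0 : H, A yl = yl ∧ Filter.Tendsto (fun k => ρ • u k) Filter.atTop (nhds yl) ∧
      A p0 = 0 ∧ ∀ q, F p0 ≤ F q + ((⟪yl, q⟫ : ℝ) : EReal) := by
  have hA : Continuous A := A.continuous_of_finiteDimensional
  have : ProperSpace H := FiniteDimensional.proper ℝ H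
  have hu : ∀ k, A (u k) = u k := by
    intro k
    induction k with
    | zero => exact hu0
    | succ k ih => rw [hdual, map_add, ih, hidem]
  obtain ⟨s, hs⟩ : ∃ s : ℕ → H, ∀ k, s k = p k - A (p k) - u k := ⟨_, fun _ => rfl⟩
  have hAs : ∀ k, A (s k) = -u k := by
    intro k
    rw [hs, map_sub, map_sub, hidem, hu]; abel
  have hstep : ∀ k, s (k + 1) = p (k + 1) - (2 : ℝ) • A (p (k + 1)) + A (s k) := by
    intro k
    rw [hAs, hs, hdual]; module
  simp only [← hs] at hsub
  -- The Fejér inequality, relative to an arbitrary saddle point.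
  have fejer : ∀ q y : H, A q = 0 → F q ≠ ⊤ → A y = y →
      (∀ r, F q ≤ F r + ((⟪y, r⟫ : ℝ) : EReal)) → ∀ k,
      ‖s (k + 1) - (q - ρ⁻¹ • y)‖ ^ 2 + ‖s k - s (k + 1)‖ ^ 2 ≤ ‖s k - (q - ρ⁻¹ • y)‖ ^ 2 := by
    intro q y hq hqf hy hqy k
    have hmono : 0 ≤ ⟪s k - p (k + 1) + ρ⁻¹ • y, p (k + 1) - q⟫ := by
      have h1 := hsub k q
      have h2 := hqy (p (k + 1))
      have hyq : ⟪y, q⟫ = 0 := by rw [← hy, hsymm, hq, inner_zero_right]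
      have hpf : F (p (k + 1)) ≠ ⊤ := by
        intro h
        rw [h, EReal.top_add_coe] at h1
        exact hqf (top_le_iff.1 h1)
      have e1 := EReal.coe_toReal hqf (hbot q)
      have e2 := EReal.coe_toReal hpf (hbot _)
      rw [← e1, ← e2] at h1 h2
      norm_cast at h1 h2
      have h3 : ρ * ⟪s k - p (k + 1), q - p (k + 1)⟫ ≤ ⟪y, p (k + 1)⟫ := by linarith
      have h4 : ⟪s k - p (k + 1) + ρ⁻¹ • y, p (k + 1) - q⟫ =
          ρ⁻¹ * (⟪y, p (k + 1)⟫ - ρ * ⟪s k - p (k + 1), q - p (k + 1)⟫) := by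
        rw [inner_add_left, real_inner_smul_left, inner_sub_right y, hyq,
          ← neg_sub q, inner_neg_right]
        field_simp
        ring
      rw [h4]
      exact mul_nonneg (inv_nonneg.2 hρ.le) (by linarith)
    have := fejer_step A hsymm hidem hq (us := ρ⁻¹ • y) (by rw [map_smul, hy]) hmono
    rwa [← hstep] at this
  have mono : ∀ q y : H, A q = 0 → F q ≠ ⊤ → A y = y →
      (∀ r, F q ≤ F r + ((⟪y, r⟫ : ℝ) : EReal)) →
      Antitone fun k => ‖s k - (q - ρ⁻¹ • y)‖ ^ 2 := by
    intro q y hq hqf hy hqy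
    refine antitone_nat_of_succ_le fun k => ?_
    have := fejer q y hq hqf hy hqy k
    have := sq_nonneg ‖s k - s (k + 1)‖
    linarith
  have hanti := mono ps ys hps hfin hys hsad
  have hdiff : Filter.Tendsto (fun k => s k - s (k + 1)) Filter.atTop (nhds 0) := by
    have hlim := tendsto_atTop_ciInf hanti ⟨0, by rintro _ ⟨k, rfl⟩; positivity⟩
    have hd := hlim.sub (hlim.comp (Filter.tendsto_add_atTop_nat 1))
    rw [sub_self] at hd
    have hsq : Filter.Tendsto (fun k => ‖s k - s (k + 1)‖ ^ 2) Filter.atTop (nhds 0) := by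
      refine squeeze_zero (fun k => by positivity) (fun k => ?_) hd
      have := fejer ps ys hps hfin hys hsad k
      simp only [Function.comp]
      linarith
    rw [tendsto_zero_iff_norm_tendsto_zero]
    simpa [Real.sqrt_sq] using hsq.sqrt
  have hbdd : ∀ k, s k ∈ Metric.closedBall (ps - ρ⁻¹ • ys) ‖s 0 - (ps - ρ⁻¹ • ys)‖ := by
    intro k
    rw [Metric.mem_closedBall, dist_eq_norm]
    exact (sq_le_sq₀ (norm_nonneg _) (norm_nonneg _)).1 (hanti (Nat.zero_le k))
  obtain ⟨s0, -, φ, hφ, hsφ⟩ := tendsto_subseq_of_bounded Metric.isBounded_closedBall hbdd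
  have hdφ := hdiff.comp hφ.tendsto_atTop
  -- `p^{k+1}` is recovered linearly from `s^k` and `s^k - s^{k+1}`.
  have hp : ∀ k, p (k + 1) = (s k - A (s k)) - (s k - s (k + 1)) +
      (2 : ℝ) • A (s k - s (k + 1)) := by
    intro k
    have h : A (s k - s (k + 1)) = A (p (k + 1)) := by
      rw [hstep, map_sub, map_add, map_sub, map_smul, hidem, hidem]; module
    rw [h, hstep]; module
  have hpφ : Filter.Tendsto (fun j => p (φ j + 1)) Filter.atTop (nhds (s0 - A s0)) := by
    have h := ((hsφ.sub ((hA.tendsto _).comp hsφ)).sub hdφ).add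
      (((hA.tendsto _).comp hdφ).const_smul (2 : ℝ))
    simp only [map_zero, smul_zero, add_zero, sub_zero] at h
    refine h.congr fun j => ?_
    simp only [Function.comp]
    exact (hp _).symm
  have hp0 : A (s0 - A s0) = 0 := by rw [map_sub, hidem, sub_self]
  have hy0 : A (-(ρ • A s0)) = -(ρ • A s0) := by rw [map_neg, map_smul, hidem]
  have hsad0 : ∀ q, F (s0 - A s0) ≤ F q + ((⟪-(ρ • A s0), q⟫ : ℝ) : EReal) := by
    intro q
    by_cases hq : F q = ⊤
    · rw [hq, EReal.top_add_coe]; exact le_top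
    have e1 := EReal.coe_toReal hq (hbot q)
    have hle : ∀ k, F (p (k + 1)) ≤
        (((F q).toReal - ρ * ⟪s k - p (k + 1), q - p (k + 1)⟫ : ℝ) : EReal) := by
      intro k
      have h1 := hsub k q
      have hpf : F (p (k + 1)) ≠ ⊤ := by
        intro h
        rw [h, EReal.top_add_coe] at h1
        exact hq (top_le_iff.1 h1)
      have e2 := EReal.coe_toReal hpf (hbot _)
      rw [← e1, ← e2] at h1
      rw [← e2]
      norm_cast at h1 ⊢
      linarith
    have hlim : Filter.Tendsto (fun j => (F q).toReal -
        ρ * ⟪s (φ j) - p (φ j + 1), q - p (φ j + 1)⟫) Filter.atTop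
        (nhds ((F q).toReal - ρ * ⟪s0 - (s0 - A s0), q - (s0 - A s0)⟫)) :=
      (((hsφ.sub hpφ).inner (hpφ.const_sub q)).const_mul ρ).const_sub _
    have hmem := hlsc.isClosed_epigraph.mem_of_tendsto
      (hpφ.prodMk_nhds (continuous_coe_real_ereal.continuousAt.tendsto.comp hlim))
      (Filter.Eventually.of_forall fun j => hle (φ j))
    have horth : ⟪A s0, s0 - A s0⟫ = 0 := by rw [hsymm, hp0, inner_zero_right]
    have e3 : (F q).toReal - ρ * ⟪s0 - (s0 - A s0), q - (s0 - A s0)⟫ =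
        (F q).toReal + ⟪-(ρ • A s0), q⟫ := by
      rw [sub_sub_cancel, inner_sub_right, horth, inner_neg_left, real_inner_smul_left]; ring
    rw [e3] at hmem
    rw [← e1]
    exact_mod_cast hmem
  have hfin0 : F (s0 - A s0) ≠ ⊤ := by
    have h := hsad0 ps
    rw [← EReal.coe_toReal hfin (hbot _), ← EReal.coe_add] at h
    exact ne_top_of_le_ne_top (EReal.coe_ne_top _) h
  have hs0 : s0 - A s0 - ρ⁻¹ • (-(ρ • A s0)) = s0 := by
    rw [smul_neg, smul_smul, inv_mul_cancel₀ hρ.ne', one_smul]; abel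
  have hanti0 := mono _ _ hp0 hfin0 hy0 hsad0
  rw [hs0] at hanti0
  -- An antitone sequence with a subsequence tending to `0` tends to `0`.
  have hsub0 : Filter.Tendsto (fun j => ‖s (φ j) - s0‖ ^ 2) Filter.atTop (nhds 0) := by
    have := ((hsφ.sub_const s0).norm).pow 2
    simpa using this
  have hlim0 := tendsto_atTop_ciInf hanti0 ⟨0, by rintro _ ⟨k, rfl⟩; positivity⟩
  have hzero := tendsto_nhds_unique (hlim0.comp hφ.tendsto_atTop) hsub0
  rw [hzero] at hlim0
  have hslim : Filter.Tendsto s Filter.atTop (nhds s0) := by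
    rw [tendsto_iff_norm_sub_tendsto_zero]
    simpa [Real.sqrt_sq] using hlim0.sqrt
  refine ⟨-(ρ • A s0), s0 - A s0, hy0, ?_, hp0, hsad0⟩
  refine (((hA.tendsto _).comp hslim).const_smul ρ).neg.congr fun k => ?_
  simp only [Function.comp, hAs, smul_neg, neg_neg]

end Abstract

/-! ### Subgradient inequality of a proximal step -/

/-- First-order optimality of a proximal step: `ρ (x - p)` is a subgradient of `f` at
`p = prox_{f,ρ}(x)`. It follows by comparing `p` with `p + a (y - p)` and letting `a → 0`. -/
lemma subgrad_of_prox {ι E : Type*} [Fintype ι] [NormedAddCommGroup E] [InnerProductSpace ℝ E]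
    (f : (ι → E) → EReal) (hbot : ∀ x, f x ≠ ⊥)
    (hconv : ∀ x y : ι → E, ∀ a b : ℝ, 0 ≤ a → 0 ≤ b → a + b = 1 →
      f (a • x + b • y) ≤ (a : EReal) * f x + (b : EReal) * f y)
    (hproper : ∃ x, f x ≠ ⊤) (ρ : ℝ) (x p : ι → E)
    (hprox : ∀ y : ι → E, f p + (((ρ / 2) * ∑ t, ‖x t - p t‖ ^ 2 : ℝ) : EReal) ≤
      f y + (((ρ / 2) * ∑ t, ‖x t - y t‖ ^ 2 : ℝ) : EReal)) (y : ι → E) :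
    f p + ((ρ * ∑ t, ⟪x t - p t, y t - p t⟫ : ℝ) : EReal) ≤ f y := by
  by_cases hy : f y = ⊤
  · rw [hy]; exact le_top
  have hp : f p ≠ ⊤ := by
    obtain ⟨z, hz⟩ := hproper
    intro h
    have := hprox z
    rw [h, EReal.top_add_coe, ← EReal.coe_toReal hz (hbot z), ← EReal.coe_add] at this
    exact EReal.coe_ne_top _ (top_le_iff.1 this)
  have ey := EReal.coe_toReal hy (hbot y)
  have ep := EReal.coe_toReal hp (hbot p)
  set S := ∑ t, ⟪x t - p t, y t - p t⟫ with hS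
  set C := ∑ t, ‖y t - p t‖ ^ 2 with hC
  have key : ∀ a : ℝ, 0 < a → a ≤ 1 →
      (f p).toReal + ρ * S ≤ (f y).toReal + a * (ρ / 2 * C) := by
    intro a ha ha1
    have h1 := hprox ((1 - a) • p + a • y)
    have h2 := hconv p y (1 - a) a (by linarith) ha.le (by ring)
    have h3 := h1.trans (add_le_add_left h2 _)
    have hexp : ∑ t, ‖x t - ((1 - a) • p + a • y) t‖ ^ 2 =
        ∑ t, ‖x t - p t‖ ^ 2 - 2 * a * S + a ^ 2 * C := by
      rw [hS, hC, Finset.mul_sum, Finset.mul_sum, ← Finset.sum_sub_distrib,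
        ← Finset.sum_add_distrib]
      refine Finset.sum_congr rfl fun t _ => ?_
      have : x t - ((1 - a) • p + a • y) t = (x t - p t) - a • (y t - p t) := by
        simp only [Pi.add_apply, Pi.smul_apply]; module
      rw [this, norm_sub_sq_real, real_inner_smul_right, norm_smul, mul_pow, Real.norm_eq_abs,
        sq_abs]
      ring
    rw [hexp, ← ey, ← ep] at h3
    norm_cast at h3
    have h4 : a * ((f p).toReal + ρ * S) ≤ a * ((f y).toReal + a * (ρ / 2 * C)) := by linarith
    exact le_of_mul_le_mul_left h4 ha
  rw [← ey, ← ep]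
  norm_cast
  have hlim : Filter.Tendsto (fun a : ℝ => (f y).toReal + a * (ρ / 2 * C))
      (nhdsWithin 0 (Set.Ioi 0)) (nhds ((f y).toReal + 0 * (ρ / 2 * C))) :=
    (Continuous.tendsto (by fun_prop) 0).mono_left nhdsWithin_le_nhds
  rw [zero_mul, add_zero] at hlim
  refine ge_of_tendsto hlim ?_
  filter_upwards [Ioc_mem_nhdsGT (zero_lt_one (α := ℝ))] with a ha using key a ha.1 ha.2

/-! ### Net averaging as an orthogonal projection -/

section NetAvg

variable {𝒯 N : Type*} [Fintype 𝒯] [DecidableEq N] {T : ℕ} (net : 𝒯 → N)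

lemma netAvg_const (p : 𝒯 → EuclideanSpace ℝ (Fin T)) {t t' : 𝒯} (h : net t = net t') :
    netAvg net p t = netAvg net p t' := by
  simp only [netAvg, h]

lemma netAvg_of_const {p : 𝒯 → EuclideanSpace ℝ (Fin T)}
    (hp : ∀ t t', net t = net t' → p t = p t') (t : 𝒯) : netAvg net p t = p t := by
  have hne : ((univ.filter fun t' => net t' = net t).card : ℝ) ≠ 0 := by
    rw [Nat.cast_ne_zero]
    exact Finset.card_ne_zero_of_mem (a := t) (by simp)
  have : ∑ t' ∈ univ.filter (fun t' => net t' = net t), p t' =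
      ∑ t' ∈ univ.filter (fun t' => net t' = net t), p t :=
    Finset.sum_congr rfl fun t' h => hp _ _ (by simpa using h)
  rw [netAvg, this, Finset.sum_const, ← Nat.cast_smul_eq_nsmul ℝ, smul_smul,
    inv_mul_cancel₀ hne, one_smul]

/-- `p ↦ p̄` as a linear map, on the space of power schedules with its Euclidean structure. -/
noncomputable def avgLin : PiLp 2 (fun _ : 𝒯 => EuclideanSpace ℝ (Fin T)) →ₗ[ℝ]
    PiLp 2 (fun _ : 𝒯 => EuclideanSpace ℝ (Fin T)) where
  toFun p := WithLp.toLp 2 (netAvg net p.ofLp)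
  map_add' p q := by
    ext1 t
    simp [netAvg, Finset.sum_add_distrib]
  map_smul' c p := by
    ext1 t
    simp only [netAvg, PiLp.smul_apply, RingHom.id_apply, ← Finset.smul_sum]
    rw [smul_comm]

lemma avgLin_apply (p : PiLp 2 (fun _ : 𝒯 => EuclideanSpace ℝ (Fin T))) :
    avgLin net p = WithLp.toLp 2 (netAvg net p.ofLp) := rfl

lemma avgLin_symm (p q : PiLp 2 (fun _ : 𝒯 => EuclideanSpace ℝ (Fin T))) :
    ⟪avgLin net p, q⟫ = ⟪p, avgLin net q⟫ := by
  rw [PiLp.inner_apply, PiLp.inner_apply]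
  simp only [avgLin_apply, netAvg, real_inner_smul_left, real_inner_smul_right,
    sum_inner, inner_sum, Finset.sum_filter, Finset.mul_sum]
  rw [Finset.sum_comm]
  refine Finset.sum_congr rfl fun t _ => Finset.sum_congr rfl fun t' _ => ?_
  by_cases h : net t = net t'
  · simp [h]
  · simp [h, Ne.symm h]

lemma avgLin_idem (p : PiLp 2 (fun _ : 𝒯 => EuclideanSpace ℝ (Fin T))) :
    avgLin net (avgLin net p) = avgLin net p := by
  ext1 t
  exact netAvg_of_const net (fun _ _ h => netAvg_const net _ h) t

end NetAvg

/-! ### Finite sums of extended reals -/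

lemma ereal_sum_ne_bot {ι : Type*} (s : Finset ι) (g : ι → EReal) (h : ∀ i, g i ≠ ⊥) :
    ∑ i ∈ s, g i ≠ ⊥ := by
  classical
  induction s using Finset.induction_on with
  | empty => simp
  | insert i s hi ih =>
    rw [Finset.sum_insert hi]
    simp [EReal.add_eq_bot_iff, h, ih]

lemma ereal_sum_lsc {ι X : Type*} [TopologicalSpace X] (s : Finset ι) (g : ι → X → EReal)
    (hbot : ∀ i x, g i x ≠ ⊥) (h : ∀ i, LowerSemicontinuous (g i)) :
    LowerSemicontinuous fun x => ∑ i ∈ s, g i x := by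
  classical
  induction s using Finset.induction_on with
  | empty => simpa using lowerSemicontinuous_const
  | insert i s hi ih =>
    simp only [Finset.sum_insert hi]
    exact (h i).add' ih fun x => EReal.continuousAt_add
      (Or.inr (ereal_sum_ne_bot _ _ fun j => hbot j x)) (Or.inl (hbot i x))

lemma ereal_coe_sum {ι : Type*} (s : Finset ι) (g : ι → ℝ) :
    ((∑ i ∈ s, g i : ℝ) : EReal) = ∑ i ∈ s, (g i : EReal) := by
  classical
  induction s using Finset.induction_on with
  | empty => simp
  | insert i s hi ih => rw [Finset.sum_insert hi, Finset.sum_insert hi, EReal.coe_add, ih]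

/-- Prox-average message passing: if all device objectives are convex, lower
semicontinuous and proper, and a saddle point exists, then the scaled dual iterates
`ρ u^k` converge to some `y⋆`, constant on each net, which is a set of optimal Lagrange
multipliers: some optimal point of the OPSP minimizes the Lagrangian
`q ↦ f(q) + ∑_t ⟨y⋆_t, q̄_t⟩`. -/
theorem stmt8 {𝒯 D N : Type*} [Fintype 𝒯] [Fintype D] [DecidableEq D] [DecidableEq N]
    (dev : 𝒯 → D) (net : 𝒯 → N) (hsurj : Function.Surjective net) (T : ℕ)
    (f : ∀ d : D, ({t : 𝒯 // dev t = d} → EuclideanSpace ℝ (Fin T)) → EReal)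
    (hbot : ∀ d x, f d x ≠ ⊥)
    (hconv : ∀ d, ∀ x y : {t : 𝒯 // dev t = d} → EuclideanSpace ℝ (Fin T), ∀ a b : ℝ,
      0 ≤ a → 0 ≤ b → a + b = 1 →
      f d (a • x + b • y) ≤ (a : EReal) * f d x + (b : EReal) * f d y)
    (hlsc : ∀ d, LowerSemicontinuous (f d))
    (hproper : ∀ d, ∃ x, f d x ≠ ⊤)
    (ρ : ℝ) (hρ : 0 < ρ)
    (p u : ℕ → 𝒯 → EuclideanSpace ℝ (Fin T))
    (hu0 : ∀ t t', net t = net t' → u 0 t = u 0 t')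
    -- proximal power schedule update:
    -- `p^{k+1}_d = prox_{f_d,ρ}(p^k_d − p̄^k_d − u^k_d)` for every device `d`
    (hprox : ∀ k d, ∀ y : {t : 𝒯 // dev t = d} → EuclideanSpace ℝ (Fin T),
      f d (fun t => p (k + 1) t.1) +
        (((ρ / 2) * ∑ t : {t : 𝒯 // dev t = d},
          ‖(p k t.1 - netAvg net (p k) t.1 - u k t.1) - p (k + 1) t.1‖ ^ 2 : ℝ) : EReal) ≤
      f d y +
        (((ρ / 2) * ∑ t : {t : 𝒯 // dev t = d},
          ‖(p k t.1 - netAvg net (p k) t.1 - u k t.1) - y t‖ ^ 2 : ℝ) : EReal))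
    -- scaled price update: `u^{k+1} = u^k + p̄^{k+1}`
    (hdual : ∀ k t, u (k + 1) t = u k t + netAvg net (p (k + 1)) t)
    -- a saddle point exists: an optimal primal `p⋆` with `p̄⋆ = 0` and finite `f(p⋆)`,
    -- together with `y⋆` constant on each net, such that `p⋆` minimizes the Lagrangian
    (pstar ystar : 𝒯 → EuclideanSpace ℝ (Fin T))
    (hfeas : ∀ t, netAvg net pstar t = 0)
    (hfin : netObj dev f pstar ≠ ⊤)
    (hopt : ∀ q : 𝒯 → EuclideanSpace ℝ (Fin T),
      (∀ t, netAvg net q t = 0) → netObj dev f pstar ≤ netObj dev f q)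
    (hyconst : ∀ t t', net t = net t' → ystar t = ystar t')
    (hsaddle : ∀ q : 𝒯 → EuclideanSpace ℝ (Fin T),
      netObj dev f pstar + ((∑ t, ⟪ystar t, netAvg net pstar t⟫ : ℝ) : EReal) ≤
        netObj dev f q + ((∑ t, ⟪ystar t, netAvg net q t⟫ : ℝ) : EReal)) :
    -- the scaled dual iterates converge to a set of optimal Lagrange multipliers
    ∃ ylim : 𝒯 → EuclideanSpace ℝ (Fin T),
      (∀ t t', net t = net t' → ylim t = ylim t') ∧
      Filter.Tendsto (fun k => ρ • u k) Filter.atTop (nhds ylim) ∧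
      ∃ p0 : 𝒯 → EuclideanSpace ℝ (Fin T),
        (∀ t, netAvg net p0 t = 0) ∧
        (∀ q : 𝒯 → EuclideanSpace ℝ (Fin T),
          (∀ t, netAvg net q t = 0) → netObj dev f p0 ≤ netObj dev f q) ∧
        (∀ q : 𝒯 → EuclideanSpace ℝ (Fin T),
          netObj dev f p0 + ((∑ t, ⟪ylim t, netAvg net p0 t⟫ : ℝ) : EReal) ≤
            netObj dev f q + ((∑ t, ⟪ylim t, netAvg net q t⟫ : ℝ) : EReal)) := by
  -- The lemma on splitting is applied in the Hilbert space `PiLp 2`, since the norm of a plain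
  -- function space is the supremum norm.
  set A := avgLin (T := T) net with hA
  have hpair : ∀ y q : 𝒯 → EuclideanSpace ℝ (Fin T), (∀ t t', net t = net t' → y t = y t') →
      ∑ t, ⟪y t, netAvg net q t⟫ = ⟪WithLp.toLp 2 y, WithLp.toLp 2 q⟫ := by
    intro y q hy
    have h := avgLin_symm net (WithLp.toLp 2 y) (WithLp.toLp 2 q)
    have hy' : avgLin net (WithLp.toLp 2 y) = WithLp.toLp 2 y := by
      ext1 t
      exact netAvg_of_const net hy t
    rw [hy'] at h
    rw [h]
    simp [PiLp.inner_apply, avgLin_apply]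
  have hsub : ∀ k (q : 𝒯 → EuclideanSpace ℝ (Fin T)), netObj dev f (p (k + 1)) +
      ((ρ * ∑ t, ⟪p k t - netAvg net (p k) t - u k t - p (k + 1) t, q t - p (k + 1) t⟫ : ℝ)
        : EReal) ≤ netObj dev f q := by
    intro k q
    have hd := fun d => subgrad_of_prox (f d) (hbot d) (hconv d) (hproper d) ρ
      (fun t => p k t.1 - netAvg net (p k) t.1 - u k t.1) (fun t => p (k + 1) t.1)
      (hprox k d) (fun t => q t.1)
    have hsum := Finset.sum_le_sum fun d (_ : d ∈ univ) => hd d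
    rw [Finset.sum_add_distrib, ← ereal_coe_sum, ← Finset.mul_sum] at hsum
    rw [Fintype.sum_fiberwise dev (fun t =>
      ⟪p k t - netAvg net (p k) t - u k t - p (k + 1) t, q t - p (k + 1) t⟫)] at hsum
    exact hsum
  obtain ⟨yl, p0, hyl, hlim, hp0, hmin⟩ := splitting_converges
    (fun q : PiLp 2 (fun _ : 𝒯 => EuclideanSpace ℝ (Fin T)) => netObj dev f q.ofLp)
    (fun q => ereal_sum_ne_bot _ _ fun d => hbot d _)
    (ereal_sum_lsc _ _ (fun d _ => hbot d _) fun d =>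
      (hlsc d).comp (by fun_prop))
    A (avgLin_symm net) (avgLin_idem net) ρ hρ
    (fun k => WithLp.toLp 2 (p k)) (fun k => WithLp.toLp 2 (u k))
    (by ext1 t; exact netAvg_of_const net hu0 t)
    (fun k q => by
      have := hsub k q.ofLp
      simpa [PiLp.inner_apply, hA, avgLin_apply] using this)
    (fun k => by ext1 t; exact hdual k t)
    (WithLp.toLp 2 pstar) (WithLp.toLp 2 ystar)
    (by ext1 t; exact hfeas t) hfin
    (by ext1 t; exact netAvg_of_const net hyconst t)
    (fun q => by
      have := hsaddle q.ofLp
      rw [hpair _ q.ofLp hyconst] at this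
      simpa [hfeas] using this)
  have hylc : ∀ t t', net t = net t' → yl t = yl t' := by
    intro t t' h
    rw [← hyl]
    exact netAvg_const net _ h
  have hp0' : ∀ t, netAvg net p0.ofLp t = 0 := fun t =>
    congrArg (fun z : PiLp 2 (fun _ : 𝒯 => EuclideanSpace ℝ (Fin T)) => z t) hp0
  have hlag : ∀ q : 𝒯 → EuclideanSpace ℝ (Fin T), netObj dev f p0.ofLp ≤
      netObj dev f q + ((∑ t, ⟪yl t, netAvg net q t⟫ : ℝ) : EReal) := by
    intro q
    rw [hpair _ q hylc]
    exact hmin (WithLp.toLp 2 q)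
  refine ⟨yl.ofLp, hylc, ?_, p0.ofLp, hp0', ?_, ?_⟩
  · exact ((PiLp.continuous_ofLp 2 _).tendsto yl).comp hlim
  · intro q hq
    have := hlag q
    simpa [hq] using this
  · intro q
    have := hlag q
    simpa [hp0'] using this
end
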